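/- arXiv:0811.3496 — 2 statements merged into one kernel-verified Lean document; each statement's English description precedes it below -/
import Mathlib

section
/- Given any discrete-time interconnection Λ ∈ ℝ^{p×p} (not necessarily connected), there exists α > 0 such that for every map Q : ℕ → Q̄_n, the solution of x(k+1) = (I_{np} + (Λ − I_p) ⊗ Q_k) x(k) satisfies |x(k)| ≤ α |x(0)| for all k ∈ ℕ. -/
open Matrix Filter
open scoped Kronecker

noncomputable section

/-- Euclidean norm of a vector. -/
def eunorm {ι : Type*} [Fintype ι] (v : ι → ℝ) : ℝ := Real.sqrt (∑ i, v i ^ 2)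

/-- Spectral (induced 2-) norm of a matrix. -/
def specNorm {m n : Type*} [Fintype m] [Fintype n] (M : Matrix m n ℝ) : ℝ :=
  sSup {c : ℝ | ∃ v : n → ℝ, eunorm v ≤ 1 ∧ c = eunorm (M.mulVec v)}

/-- Smallest singular value of a matrix. -/
def sigmaMin {m n : Type*} [Fintype m] [Fintype n] (M : Matrix m n ℝ) : ℝ :=
  sInf {c : ℝ | ∃ v : n → ℝ, eunorm v = 1 ∧ c = eunorm (M.mulVec v)}

/-- Largest singular value of a matrix. -/
def sigmaMax {m n : Type*} [Fintype m] [Fintype n] (M : Matrix m n ℝ) : ℝ :=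
  sSup {c : ℝ | ∃ v : n → ℝ, eunorm v = 1 ∧ c = eunorm (M.mulVec v)}

/-- A discrete-time interconnection matrix: entrywise nonnegative and row-stochastic. -/
def IsInterconnectionDT {p : ℕ} (Λ : Matrix (Fin p) (Fin p) ℝ) : Prop :=
  (∀ i j, 0 ≤ Λ i j) ∧ ∀ i, ∑ j, Λ i j = 1

/-- Connectedness of the graph of a matrix (edge `(i,j)` iff the `(i,j)` entry is positive):
there is a node to which there is a directed path from every other node. -/
def ConnectedMat {p : ℕ} (Λ : Matrix (Fin p) (Fin p) ℝ) : Prop :=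
  ∃ v : Fin p, ∀ u : Fin p, Relation.ReflTransGen (fun i j => 0 < Λ i j) u v

/-- Membership in `Q̄_n`: symmetric positive semidefinite with spectral norm at most 1. -/
def InQbar {n : ℕ} (R : Matrix (Fin n) (Fin n) ℝ) : Prop :=
  R.PosSemidef ∧ specNorm R ≤ 1

/-- `δ(ε, N) = ε⁴/(16 N⁸ n⁴)` (discrete time). -/
def deltaDT (n : ℕ) (ε : ℝ) (N : ℕ) : ℝ := ε ^ 4 / (16 * (N : ℝ) ^ 8 * (n : ℝ) ^ 4)

/-- Sufficient excitation for `Q : ℕ → Q_n` (discrete-time sense). -/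
def SuffExcitingDT {n : ℕ} (Q : ℕ → Matrix (Fin n) (Fin n) ℝ) : Prop :=
  ∃ (ε : ℕ → ℝ) (N : ℕ → ℕ), (∀ i, 0 < ε i) ∧ (∀ i, 1 ≤ N i) ∧
    (∀ i, ε i ≤ sigmaMin (∑ k ∈ Finset.Ico (∑ j ∈ Finset.range i, N j)
      ((∑ j ∈ Finset.range i, N j) + N i), Q k)) ∧
    Tendsto (fun M => ∑ i ∈ Finset.range M, deltaDT n (ε i) (N i)) atTop atTop

/-- Persistence of excitation for `Q : ℕ → Q_n` (discrete-time sense). -/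
def PersExcitingDT {n : ℕ} (Q : ℕ → Matrix (Fin n) (Fin n) ℝ) : Prop :=
  ∃ (ε : ℝ) (N : ℕ), 0 < ε ∧ 1 ≤ N ∧ ∀ k₀ : ℕ,
    ε ≤ sigmaMin (∑ k ∈ Finset.Ico k₀ (k₀ + N), Q k)

lemma dotProduct_self_nonneg {ι : Type*} [Fintype ι] (v : ι → ℝ) : 0 ≤ v ⬝ᵥ v :=
  Finset.sum_nonneg fun i _ => mul_self_nonneg (v i)

lemma norm_sq_le_dotProduct_self {ι : Type*} [Fintype ι] (v : ι → ℝ) :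
    ‖v‖ ^ 2 ≤ v ⬝ᵥ v := by
  have hv : ‖v‖ ≤ Real.sqrt (v ⬝ᵥ v) := by
    refine (pi_norm_le_iff_of_nonneg (Real.sqrt_nonneg _)).2 fun i => ?_
    refine Real.abs_le_sqrt ?_
    rw [dotProduct, sq]
    exact Finset.single_le_sum (f := fun i => v i * v i)
      (fun j _ => mul_self_nonneg (v j)) (Finset.mem_univ i)
  exact (Real.le_sqrt (norm_nonneg _) (dotProduct_self_nonneg v)).1 hv

open scoped Matrix.Norms.Operator in
/-- A square matrix acts boundedly for the Euclidean form, with an explicit constant. -/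
lemma mulVec_dotProduct_self_le {ι : Type*} [Fintype ι] [DecidableEq ι]
    (X : Matrix ι ι ℝ) (v : ι → ℝ) :
    (X *ᵥ v) ⬝ᵥ (X *ᵥ v) ≤ (Fintype.card ι * ‖X‖ ^ 2) * (v ⬝ᵥ v) := by
  have hX : ‖X *ᵥ v‖ ≤ ‖X‖ * ‖v‖ := linfty_opNorm_mulVec X v
  calc (X *ᵥ v) ⬝ᵥ (X *ᵥ v) ≤ ∑ _i : ι, (‖X‖ * ‖v‖) ^ 2 := by
        refine Finset.sum_le_sum fun i _ => ?_
        rw [← sq, ← sq_abs]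
        have := (norm_le_pi_norm (X *ᵥ v) i).trans hX
        rw [Real.norm_eq_abs] at this
        gcongr
    _ = (Fintype.card ι * ‖X‖ ^ 2) * ‖v‖ ^ 2 := by
        simp only [Finset.sum_const, Finset.card_univ, nsmul_eq_mul]
        ring
    _ ≤ _ := by gcongr; exact norm_sq_le_dotProduct_self v

/-- The closed semigroup generated by a contraction in a proper normed ring contains an
idempotent; it commutes with the contraction and is a limit of arbitrarily high powers. -/
lemma exists_idempotent_limit_of_powers {R : Type*} [NormedRing R] [ProperSpace R]
    (M : R) (hM : ‖M‖ ≤ 1) :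
    ∃ E : R, E * E = E ∧ Commute M E ∧
      ∀ (j : ℕ) (ε : ℝ), 0 < ε → ∃ m, j ≤ m ∧ ‖M ^ m - E‖ < ε := by
  set S : Set R := Set.range fun k : ℕ => M ^ (k + 1)
  have hSb : closure S ⊆ Metric.closedBall 0 1 := by
    refine closure_minimal ?_ Metric.isClosed_closedBall
    rintro _ ⟨k, rfl⟩
    rw [mem_closedBall_zero_iff]
    exact (norm_pow_le' M k.succ_pos).trans (pow_le_one₀ (norm_nonneg _) hM)
  have hcomp : IsCompact (closure S) :=
    (isCompact_closedBall (0 : R) 1).of_isClosed_subset isClosed_closure hSb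
  have hmul : ∀ᵉ (x ∈ closure S) (y ∈ closure S), x * y ∈ closure S := by
    intro x hx y hy
    refine map_mem_closure₂ continuous_mul hx hy ?_
    rintro _ ⟨a, rfl⟩ _ ⟨b, rfl⟩
    exact ⟨a + b + 1, by simp only [← pow_add]; congr 1; omega⟩
  obtain ⟨E, hE, hEE⟩ := exists_idempotent_in_compact_subsemigroup
    (fun r => continuous_id.mul continuous_const) (closure S)
    (Set.Nonempty.closure ⟨_, 0, rfl⟩) hcomp hmul
  have hEpow : ∀ j : ℕ, E ^ (j + 1) = E := fun j => IsIdempotentElem.pow_succ_eq j hEE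
  refine ⟨E, hEE, ?_, fun j ε hε => ?_⟩
  · have hcl : closure S ⊆ {X | M * X = X * M} := by
      refine closure_minimal ?_ (isClosed_eq (by fun_prop) (by fun_prop))
      rintro _ ⟨k, rfl⟩
      exact (Commute.refl M).pow_right (k + 1)
    exact hcl hE
  · have h1 : E ^ (j + 1) ∈ closure (Set.range fun k : ℕ => M ^ ((k + 1) * (j + 1))) := by
      refine map_mem_closure (f := fun X : R => X ^ (j + 1)) (by fun_prop) hE ?_
      rintro _ ⟨k, rfl⟩
      exact ⟨k, pow_mul M _ _⟩
    rw [hEpow] at h1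
    obtain ⟨_, ⟨k, rfl⟩, hk⟩ := Metric.mem_closure_iff.1 h1 ε hε
    refine ⟨(k + 1) * (j + 1), by nlinarith [Nat.zero_le (k * j)], ?_⟩
    rwa [dist_comm, dist_eq_norm] at hk

lemma dotProduct_transpose_mul_mulVec {ι : Type*} [Fintype ι]
    (X A : Matrix ι ι ℝ) (v : ι → ℝ) :
    v ⬝ᵥ ((Xᵀ * A * X) *ᵥ v) = (X *ᵥ v) ⬝ᵥ (A *ᵥ (X *ᵥ v)) := by
  rw [mul_assoc, ← mulVec_mulVec, dotProduct_mulVec, vecMul_transpose, ← mulVec_mulVec]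

lemma dotProduct_transpose_mul_self_mulVec {ι : Type*} [Fintype ι]
    (X : Matrix ι ι ℝ) (v : ι → ℝ) :
    v ⬝ᵥ ((Xᵀ * X) *ᵥ v) = (X *ᵥ v) ⬝ᵥ (X *ᵥ v) := by
  rw [← mulVec_mulVec, dotProduct_mulVec, vecMul_transpose]

open scoped Matrix.Norms.Operator in
/-- Limit of the Cesàro means of the forms `v ↦ |M ^ k v|²`: an `M`-invariant form. -/
lemma exists_invariant_form {ι : Type*} [Fintype ι] [DecidableEq ι]
    (M : Matrix ι ι ℝ) (hM : ‖M‖ ≤ 1) :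
    ∃ A : Matrix ι ι ℝ, A.PosSemidef ∧ Mᵀ * A * M = A ∧
      ∀ (v : ι → ℝ) (c : ℝ), (∀ k, c ≤ (M ^ k *ᵥ v) ⬝ᵥ (M ^ k *ᵥ v)) → c ≤ v ⬝ᵥ (A *ᵥ v) := by
  set G : ℕ → Matrix ι ι ℝ := fun k => (M ^ k)ᵀ * M ^ k with hG
  obtain ⟨C, hC⟩ : ∃ C, ∀ k, ‖G k‖ ≤ C := by
    obtain ⟨C, hC⟩ := (isCompact_closedBall (0 : Matrix ι ι ℝ) 1).exists_bound_of_continuousOn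
      (f := fun X : Matrix ι ι ℝ => Xᵀ * X) (by fun_prop)
    refine ⟨max C ‖G 0‖, fun k => ?_⟩
    rcases k with _ | k
    · exact le_max_right _ _
    · refine (hC (M ^ (k + 1)) ?_).trans (le_max_left _ _)
      rw [mem_closedBall_zero_iff]
      exact (norm_pow_le' M k.succ_pos).trans (pow_le_one₀ (norm_nonneg _) hM)
  set A : ℕ → Matrix ι ι ℝ := fun N => ((N : ℝ) + 1)⁻¹ • ∑ k ∈ Finset.range (N + 1), G k with hA
  have hAC : ∀ N, A N ∈ Metric.closedBall (0 : Matrix ι ι ℝ) C := by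
    intro N
    have hN : (0 : ℝ) < (N : ℝ) + 1 := by positivity
    rw [mem_closedBall_zero_iff, hA]
    simp only
    rw [norm_smul, norm_inv, Real.norm_of_nonneg hN.le, inv_mul_le_iff₀ hN]
    refine (norm_sum_le_of_le _ fun k _ => hC k).trans ?_
    simp
  obtain ⟨L, -, φ, hφ, hL⟩ := tendsto_subseq_of_bounded Metric.isBounded_closedBall hAC
  have hquad : ∀ N v, v ⬝ᵥ (A N *ᵥ v) = ((N : ℝ) + 1)⁻¹ *
      ∑ k ∈ Finset.range (N + 1), (M ^ k *ᵥ v) ⬝ᵥ (M ^ k *ᵥ v) := by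
    intro N v
    simp only [hA, smul_mulVec, dotProduct_smul, sum_mulVec, dotProduct_sum, smul_eq_mul, hG,
      dotProduct_transpose_mul_self_mulVec]
  have hlow : ∀ (v : ι → ℝ) (c : ℝ), (∀ k, c ≤ (M ^ k *ᵥ v) ⬝ᵥ (M ^ k *ᵥ v)) →
      c ≤ v ⬝ᵥ (L *ᵥ v) := by
    intro v c hc
    have hcont : Continuous fun X : Matrix ι ι ℝ => v ⬝ᵥ (X *ᵥ v) := by fun_prop
    refine ge_of_tendsto' ((hcont.tendsto L).comp hL) fun N => ?_
    simp only [Function.comp_apply, hquad]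
    have hN : (0 : ℝ) < (φ N : ℝ) + 1 := by positivity
    rw [le_inv_mul_iff₀ hN]
    calc ((φ N : ℝ) + 1) * c = ∑ _k ∈ Finset.range (φ N + 1), c := by simp
      _ ≤ _ := Finset.sum_le_sum fun k _ => hc k
  refine ⟨L, PosSemidef.of_dotProduct_mulVec_nonneg ?_ fun v => ?_, ?_, hlow⟩
  · have hcl : IsClosed {X : Matrix ι ι ℝ | Xᵀ = X} := isClosed_eq (by fun_prop) (by fun_prop)
    have : Lᵀ = L := by
      refine hcl.mem_of_tendsto hL (Eventually.of_forall fun N => ?_)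
      simp [hA, hG, transpose_sum]
    simpa [IsHermitian, conjTranspose_eq_transpose_of_trivial] using this
  · simpa using hlow v 0 fun k => dotProduct_self_nonneg _
  · have hdiff : ∀ N, Mᵀ * A N * M - A N = ((N : ℝ) + 1)⁻¹ • (G (N + 1) - G 0) := by
      intro N
      have hstep : ∀ k, Mᵀ * G k * M = G (k + 1) := by
        intro k
        simp only [hG, pow_succ, transpose_mul, mul_assoc]
      simp only [hA, mul_smul_comm, smul_mul_assoc, Finset.mul_sum, Finset.sum_mul, hstep,
        ← smul_sub, ← Finset.sum_sub_distrib, Finset.sum_range_sub]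
    have hzero : Tendsto (fun N => Mᵀ * A N * M - A N) atTop (nhds 0) := by
      simp only [hdiff]
      refine squeeze_zero_norm (a := fun N : ℕ => ((N : ℝ) + 1)⁻¹ * (C + C)) (fun N => ?_) ?_
      · have hN : (0 : ℝ) < (N : ℝ) + 1 := by positivity
        rw [norm_smul, norm_inv, Real.norm_of_nonneg hN.le]
        gcongr
        exact (norm_sub_le _ _).trans (add_le_add (hC _) (hC _))
      · simpa [one_div] using
          (tendsto_one_div_add_atTop_nhds_zero_nat (𝕜 := ℝ)).mul_const (C + C)
    have hcont : Continuous fun X : Matrix ι ι ℝ => Mᵀ * X * M - X := by fun_prop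
    exact sub_eq_zero.1 (tendsto_nhds_unique ((hcont.tendsto L).comp hL)
      (hzero.comp hφ.tendsto_atTop))

open scoped Matrix.Norms.Operator in
/-- A contraction for the `ℓ^∞` norm admits a positive definite Lyapunov form. -/
lemma exists_posDef_lyapunov {ι : Type*} [Fintype ι] [DecidableEq ι]
    (M : Matrix ι ι ℝ) (hM : ‖M‖ ≤ 1) :
    ∃ P : Matrix ι ι ℝ, P.PosDef ∧
      ∀ v, (M *ᵥ v) ⬝ᵥ (P *ᵥ (M *ᵥ v)) ≤ v ⬝ᵥ (P *ᵥ v) := by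
  obtain ⟨E, hEE, hME, hlim⟩ := exists_idempotent_limit_of_powers M hM
  obtain ⟨A, hA, hMA, hAlow⟩ := exists_invariant_form M hM
  set F : Matrix ι ι ℝ := 1 - E with hF
  have hEF : E * F = 0 := by rw [hF, mul_sub, hEE, mul_one, sub_self]
  have hMF : Commute M F := (Commute.one_right M).sub_right hME
  obtain ⟨m, hm1, hm⟩ := hlim 1 (1 / (Fintype.card ι + 1)) (by positivity)
  have hsmall : (Fintype.card ι : ℝ) * ‖M ^ m - E‖ ^ 2 ≤ 1 := by
    have hp : (0 : ℝ) ≤ Fintype.card ι := by positivity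
    have h0 := norm_nonneg (M ^ m - E)
    rw [lt_div_iff₀ (by positivity)] at hm
    nlinarith
  set q : (ι → ℝ) → ℝ := fun v =>
    ∑ k ∈ Finset.range m, (M ^ k *ᵥ (F *ᵥ v)) ⬝ᵥ (M ^ k *ᵥ (F *ᵥ v)) with hq
  set B : Matrix ι ι ℝ := ∑ k ∈ Finset.range m, (M ^ k * F)ᵀ * (M ^ k * F) with hB
  have hBq : ∀ v, v ⬝ᵥ (B *ᵥ v) = q v := by
    intro v
    simp only [hB, hq, sum_mulVec, dotProduct_sum, dotProduct_transpose_mul_self_mulVec,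
      mulVec_mulVec]
  have hq0 : ∀ v, (F *ᵥ v) ⬝ᵥ (F *ᵥ v) ≤ q v := by
    intro v
    have := Finset.single_le_sum
      (f := fun k => (M ^ k *ᵥ (F *ᵥ v)) ⬝ᵥ (M ^ k *ᵥ (F *ᵥ v)))
      (fun k _ => dotProduct_self_nonneg _) (Finset.mem_range.2 hm1)
    simpa [hq] using this
  have hAsym : Aᵀ = A := by
    simpa [IsHermitian, conjTranspose_eq_transpose_of_trivial] using hA.isHermitian
  have hAnn : ∀ v, 0 ≤ v ⬝ᵥ (A *ᵥ v) := fun v => by simpa using hA.dotProduct_mulVec_nonneg v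
  refine ⟨A + B, PosDef.of_dotProduct_mulVec_pos ?_ fun v hv => ?_, fun v => ?_⟩
  · simp [IsHermitian, conjTranspose_eq_transpose_of_trivial, hAsym, hB, transpose_sum]
  · rw [star_trivial, add_mulVec, dotProduct_add, hBq]
    by_cases hFv : F *ᵥ v = 0
    · have hEv : E *ᵥ v = v := by
        rw [hF, sub_mulVec, one_mulVec, sub_eq_zero] at hFv
        exact hFv.symm
      have hlow : ∀ k, ‖v‖ / 2 ≤ ‖M ^ k *ᵥ v‖ := by
        intro k
        obtain ⟨l, hl, hlE⟩ := hlim (k + 1) (1 / 2) (by norm_num)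
        have h1 : M ^ l *ᵥ v = M ^ (l - k) *ᵥ (M ^ k *ᵥ v) := by
          rw [mulVec_mulVec, ← pow_add]
          congr 2
          omega
        have h2 : ‖M ^ l *ᵥ v‖ ≤ ‖M ^ k *ᵥ v‖ := by
          rw [h1]
          refine (linfty_opNorm_mulVec _ _).trans (mul_le_of_le_one_left (norm_nonneg _) ?_)
          exact (norm_pow_le' M (by omega)).trans (pow_le_one₀ (norm_nonneg _) hM)
        have h3 : ‖(M ^ l - E) *ᵥ v‖ ≤ 1 / 2 * ‖v‖ :=
          (linfty_opNorm_mulVec _ _).trans (by gcongr)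
        rw [sub_mulVec, hEv] at h3
        have h4 := norm_sub_norm_le v (M ^ l *ᵥ v)
        rw [norm_sub_rev] at h4
        linarith
      have hpos : 0 < ‖v‖ := norm_pos_iff.2 hv
      have h5 : (‖v‖ / 2) ^ 2 ≤ v ⬝ᵥ (A *ᵥ v) := hAlow v _ fun k =>
        (pow_le_pow_left₀ (by positivity) (hlow k) 2).trans (norm_sq_le_dotProduct_self _)
      have h6 : 0 ≤ q v := (dotProduct_self_nonneg _).trans (hq0 v)
      have h7 : 0 < (‖v‖ / 2) ^ 2 := by positivity
      linarith
    · have h1 : 0 < (F *ᵥ v) ⬝ᵥ (F *ᵥ v) := by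
        have := dotProduct_star_self_pos_iff.2 hFv
        simpa using this
      linarith [hq0 v, hAnn v]
  · rw [add_mulVec, add_mulVec, dotProduct_add, dotProduct_add, hBq, hBq,
      ← dotProduct_transpose_mul_mulVec, hMA]
    have hshift : q (M *ᵥ v) + (F *ᵥ v) ⬝ᵥ (F *ᵥ v) =
        q v + (M ^ m *ᵥ (F *ᵥ v)) ⬝ᵥ (M ^ m *ᵥ (F *ᵥ v)) := by
      have hcomm : ∀ k, M ^ k *ᵥ (F *ᵥ (M *ᵥ v)) = M ^ (k + 1) *ᵥ (F *ᵥ v) := by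
        intro k
        simp only [mulVec_mulVec]
        rw [← hMF.eq, ← mul_assoc, pow_succ]
      simp only [hq, hcomm]
      rw [← Finset.sum_range_succ, Finset.sum_range_succ']
      simp
    have hdec : (M ^ m *ᵥ (F *ᵥ v)) ⬝ᵥ (M ^ m *ᵥ (F *ᵥ v)) ≤ (F *ᵥ v) ⬝ᵥ (F *ᵥ v) := by
      have h1 : M ^ m *ᵥ (F *ᵥ v) = (M ^ m - E) *ᵥ (F *ᵥ v) := by
        rw [sub_mulVec (M ^ m), mulVec_mulVec v E F, hEF, zero_mulVec, sub_zero]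
      rw [h1]
      exact (mulVec_dotProduct_self_le _ _).trans
        (mul_le_of_le_one_left (dotProduct_self_nonneg _) hsmall)
    linarith

open scoped Matrix.Norms.Operator in
lemma IsInterconnectionDT.norm_le_one {p : ℕ} {Λ : Matrix (Fin p) (Fin p) ℝ}
    (hΛ : IsInterconnectionDT Λ) : ‖Λ‖ ≤ 1 := by
  rw [linfty_opNorm_def]
  norm_cast
  refine Finset.sup_le fun i _ => ?_
  rw [← NNReal.coe_le_coe]
  push_cast
  simp only [Real.norm_of_nonneg (hΛ.1 i _), hΛ.2 i, le_refl]

open scoped MatrixOrder Matrix.Norms.L2Operator in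
lemma Matrix.PosDef.exists_isUnit_eq_transpose_mul_self {ι : Type*} [Fintype ι] [DecidableEq ι]
    {P : Matrix ι ι ℝ} (hP : P.PosDef) : ∃ B : Matrix ι ι ℝ, IsUnit B ∧ P = Bᵀ * B := by
  obtain ⟨B, hB, h⟩ :=
    CStarAlgebra.isStrictlyPositive_iff_eq_star_mul_self.mp hP.isStrictlyPositive
  exact ⟨B, hB, by rw [h, star_eq_conjTranspose, conjTranspose_eq_transpose_of_trivial]⟩

lemma eunorm_sq {ι : Type*} [Fintype ι] (v : ι → ℝ) : eunorm v ^ 2 = v ⬝ᵥ v := by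
  rw [eunorm, Real.sq_sqrt (Finset.sum_nonneg fun i _ => sq_nonneg _)]
  simp only [dotProduct, sq]

lemma eunorm_nonneg {ι : Type*} [Fintype ι] (v : ι → ℝ) : 0 ≤ eunorm v := Real.sqrt_nonneg _

lemma InQbar.eigenvalues_le_one {n : ℕ} {R : Matrix (Fin n) (Fin n) ℝ} (hR : InQbar R)
    (j : Fin n) : hR.1.isHermitian.eigenvalues j ≤ 1 := by
  obtain ⟨C, hC⟩ : ∃ C : ℝ, ∀ v : Fin n → ℝ, (R *ᵥ v) ⬝ᵥ (R *ᵥ v) ≤ C * (v ⬝ᵥ v) :=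
    ⟨_, mulVec_dotProduct_self_le R⟩
  set u : Fin n → ℝ := ⇑(hR.1.isHermitian.eigenvectorBasis j) with hu
  have hu1 : u ⬝ᵥ u = 1 := by
    have h := hR.1.isHermitian.eigenvectorBasis.orthonormal.1 j
    have h2 : ‖hR.1.isHermitian.eigenvectorBasis j‖ ^ 2 = 1 := by rw [h, one_pow]
    rw [EuclideanSpace.real_norm_sq_eq] at h2
    simpa only [dotProduct, ← sq] using h2
  have hbdd : BddAbove {c : ℝ | ∃ v : Fin n → ℝ, eunorm v ≤ 1 ∧ c = eunorm (R.mulVec v)} := by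
    refine ⟨Real.sqrt |C|, ?_⟩
    rintro _ ⟨v, hv, rfl⟩
    refine Real.le_sqrt_of_sq_le ?_
    rw [eunorm_sq]
    have h1 : v ⬝ᵥ v ≤ 1 := by
      rw [← eunorm_sq]
      exact pow_le_one₀ (eunorm_nonneg v) hv
    have h0 : 0 ≤ v ⬝ᵥ v := dotProduct_self_nonneg v
    calc (R *ᵥ v) ⬝ᵥ (R *ᵥ v) ≤ C * (v ⬝ᵥ v) := hC v
      _ ≤ |C| * (v ⬝ᵥ v) := by gcongr; exact le_abs_self C
      _ ≤ |C| := mul_le_of_le_one_right (abs_nonneg C) h1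
  have hle : eunorm (R *ᵥ u) ≤ 1 := by
    refine (le_csSup hbdd ⟨u, ?_, rfl⟩).trans hR.2
    refine (sq_le_sq₀ (eunorm_nonneg u) zero_le_one).1 ?_
    rw [eunorm_sq, hu1, one_pow]
  have hsq : eunorm (R *ᵥ u) ^ 2 = hR.1.isHermitian.eigenvalues j ^ 2 := by
    rw [eunorm_sq, hu, hR.1.isHermitian.mulVec_eigenvectorBasis j, ← hu]
    simp only [dotProduct_smul, smul_dotProduct, hu1, smul_eq_mul]
    ring
  have := pow_le_one₀ (n := 2) (eunorm_nonneg (R *ᵥ u)) hle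
  rw [hsq] at this
  exact (abs_le.1 ((sq_le_one_iff_abs_le_one _).1 this)).2

/-- The convex combination `(1 - d) v + d M v` does not increase a Euclidean form that `M` does
not increase. -/
lemma dotProduct_self_mulVec_relax_le {ι : Type*} [Fintype ι] (B M : Matrix ι ι ℝ)
    (h : ∀ v, (B *ᵥ (M *ᵥ v)) ⬝ᵥ (B *ᵥ (M *ᵥ v)) ≤ (B *ᵥ v) ⬝ᵥ (B *ᵥ v))
    {d : ℝ} (hd0 : 0 ≤ d) (hd1 : d ≤ 1) (v : ι → ℝ) :
    (B *ᵥ (v + d • (M *ᵥ v - v))) ⬝ᵥ (B *ᵥ (v + d • (M *ᵥ v - v))) ≤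
      (B *ᵥ v) ⬝ᵥ (B *ᵥ v) := by
  set a := B *ᵥ v
  set b := B *ᵥ (M *ᵥ v)
  have hab : B *ᵥ (v + d • (M *ᵥ v - v)) = a + d • (b - a) := by
    rw [mulVec_add, mulVec_smul, mulVec_sub]
  have hle : b ⬝ᵥ b ≤ a ⬝ᵥ a := h v
  have hnn : 0 ≤ (b - a) ⬝ᵥ (b - a) := dotProduct_self_nonneg _
  rw [hab]
  simp only [add_dotProduct, dotProduct_add, sub_dotProduct, dotProduct_sub, smul_dotProduct,
    dotProduct_smul, smul_eq_mul, dotProduct_comm b a] at hnn ⊢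
  nlinarith [mul_nonneg hd0 (sub_nonneg.2 hle),
    mul_nonneg (mul_nonneg hd0 (sub_nonneg.2 hd1)) hnn]

lemma trace_mul_transpose_mul_self_conj {m ι : Type*} [Fintype m] [Fintype ι]
    (Y : Matrix m ι ℝ) (B : Matrix ι ι ℝ) :
    (Y * (Bᵀ * B) * Yᵀ).trace = ∑ j, (B *ᵥ Y j) ⬝ᵥ (B *ᵥ Y j) := by
  have h : Y * (Bᵀ * B) * Yᵀ = (Y * Bᵀ) * (Y * Bᵀ)ᵀ := by
    simp only [transpose_mul, transpose_transpose, Matrix.mul_assoc]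
  rw [h, trace]
  refine Finset.sum_congr rfl fun j _ => ?_
  have hrow : ∀ i, (Y * Bᵀ) j i = (B *ᵥ Y j) i := fun i => by
    simp only [mul_apply, transpose_apply, mulVec, dotProduct, mul_comm]
  simp only [diag_apply, mul_apply (M := Y * Bᵀ), transpose_apply (Y * Bᵀ), hrow, dotProduct]

/-- One step of the coupled system does not increase the sum of the row forms. -/
lemma InQbar.sum_form_step_le {p n : ℕ} {Q : Matrix (Fin n) (Fin n) ℝ} (hQ : InQbar Q)
    (B M : Matrix (Fin p) (Fin p) ℝ)
    (h : ∀ v, (B *ᵥ (M *ᵥ v)) ⬝ᵥ (B *ᵥ (M *ᵥ v)) ≤ (B *ᵥ v) ⬝ᵥ (B *ᵥ v))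
    {Y Z : Matrix (Fin n) (Fin p) ℝ} (hZ : Z = Y + Q * Y * (M - 1)ᵀ) :
    ∑ j, (B *ᵥ Z j) ⬝ᵥ (B *ᵥ Z j) ≤
      ∑ j, (B *ᵥ Y j) ⬝ᵥ (B *ᵥ Y j) := by
  set d := hQ.1.isHermitian.eigenvalues with hd
  obtain ⟨U, hUU, hUtU, hQU⟩ : ∃ U : Matrix (Fin n) (Fin n) ℝ,
      U * Uᵀ = 1 ∧ Uᵀ * U = 1 ∧ Q = U * diagonal d * Uᵀ := by
    refine ⟨hQ.1.isHermitian.eigenvectorUnitary, ?_, ?_, ?_⟩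
    · simpa [star_eq_conjTranspose, conjTranspose_eq_transpose_of_trivial] using
        Unitary.coe_mul_star_self hQ.1.isHermitian.eigenvectorUnitary
    · simpa [star_eq_conjTranspose, conjTranspose_eq_transpose_of_trivial] using
        Unitary.coe_star_mul_self hQ.1.isHermitian.eigenvectorUnitary
    · have := hQ.1.isHermitian.spectral_theorem
      rw [Unitary.conjStarAlgAut_apply, star_eq_conjTranspose,
        conjTranspose_eq_transpose_of_trivial] at this
      exact this
  have hrot : ∀ X : Matrix (Fin n) (Fin p) ℝ,
      ∑ j, (B *ᵥ X j) ⬝ᵥ (B *ᵥ X j) = ∑ j, (B *ᵥ (Uᵀ * X) j) ⬝ᵥ (B *ᵥ (Uᵀ * X) j) := by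
    intro X
    rw [← trace_mul_transpose_mul_self_conj, ← trace_mul_transpose_mul_self_conj]
    have : Uᵀ * X * (Bᵀ * B) * (Uᵀ * X)ᵀ = Uᵀ * ((X * (Bᵀ * B) * Xᵀ) * U) := by
      simp only [transpose_mul, transpose_transpose, Matrix.mul_assoc]
    rw [this, trace_mul_comm Uᵀ, Matrix.mul_assoc _ U, hUU, Matrix.mul_one]
  rw [hrot Z, hrot Y]
  refine Finset.sum_le_sum fun j _ => ?_
  have hstep : (Uᵀ * Z) j =
      (Uᵀ * Y) j + d j • (M *ᵥ (Uᵀ * Y) j - (Uᵀ * Y) j) := by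
    have h1 : Uᵀ * Z = Uᵀ * Y + diagonal d * ((Uᵀ * Y) * (M - 1)ᵀ) := by
      rw [hZ, Matrix.mul_add, hQU]
      congr 1
      simp only [← Matrix.mul_assoc]
      rw [hUtU, Matrix.one_mul]
    rw [h1]
    ext i
    have h2 : (Uᵀ * Y * (M - 1)ᵀ : Matrix (Fin n) (Fin p) ℝ) j i = ((M - 1) *ᵥ (Uᵀ * Y) j) i := by
      rw [mul_apply]
      simp only [transpose_apply (M - 1), mulVec, dotProduct, mul_comm]
    rw [Matrix.add_apply, diagonal_mul, h2, sub_mulVec, one_mulVec]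
    rfl
  rw [hstep]
  exact dotProduct_self_mulVec_relax_le B M h (hQ.1.eigenvalues_nonneg j)
    (hQ.eigenvalues_le_one j) _

lemma exists_bound_mulVec_dotProduct_self {ι : Type*} [Fintype ι] [DecidableEq ι]
    (X : Matrix ι ι ℝ) :
    ∃ C : ℝ, 0 < C ∧ ∀ v, (X *ᵥ v) ⬝ᵥ (X *ᵥ v) ≤ C * (v ⬝ᵥ v) := by
  obtain ⟨C, hC⟩ : ∃ C : ℝ, ∀ v : ι → ℝ, (X *ᵥ v) ⬝ᵥ (X *ᵥ v) ≤ C * (v ⬝ᵥ v) :=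
    ⟨_, mulVec_dotProduct_self_le X⟩
  refine ⟨|C| + 1, by positivity, fun v => (hC v).trans ?_⟩
  exact mul_le_mul_of_nonneg_right ((le_abs_self C).trans (by linarith))
    (dotProduct_self_nonneg v)

theorem stmt13 {p n : ℕ} (Λ : Matrix (Fin p) (Fin p) ℝ)
    (hΛ : IsInterconnectionDT Λ) :
    ∃ α : ℝ, 0 < α ∧
      ∀ Q : ℕ → Matrix (Fin n) (Fin n) ℝ, (∀ k, InQbar (Q k)) →
        ∀ x : ℕ → (Fin p × Fin n) → ℝ,
          (∀ k : ℕ, x (k + 1)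
            = ((1 : Matrix (Fin p × Fin n) (Fin p × Fin n) ℝ)
                + (Λ - 1) ⊗ₖ Q k).mulVec (x k)) →
          ∀ k : ℕ, eunorm (x k) ≤ α * eunorm (x 0) := by
  obtain ⟨P, hP, hPΛ⟩ := exists_posDef_lyapunov Λ hΛ.norm_le_one
  obtain ⟨B, hB, rfl⟩ := hP.exists_isUnit_eq_transpose_mul_self
  simp only [dotProduct_transpose_mul_self_mulVec] at hPΛ
  obtain ⟨C, hC, hBC⟩ := exists_bound_mulVec_dotProduct_self B
  obtain ⟨D, hD, hBD⟩ := exists_bound_mulVec_dotProduct_self B⁻¹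
  have hinv : ∀ v, v ⬝ᵥ v ≤ D * ((B *ᵥ v) ⬝ᵥ (B *ᵥ v)) := by
    intro v
    have := hBD (B *ᵥ v)
    rwa [mulVec_mulVec, nonsing_inv_mul B ((isUnit_iff_isUnit_det B).1 hB), one_mulVec] at this
  refine ⟨Real.sqrt (D * C), by positivity, fun Q hQ x hx k => ?_⟩
  set Y : ℕ → Matrix (Fin n) (Fin p) ℝ := fun k => of fun j i => x k (i, j) with hY
  have hxY : ∀ k, x k = vec (Y k) := fun k => rfl
  have hnorm : ∀ k, eunorm (x k) ^ 2 = ∑ j, Y k j ⬝ᵥ Y k j := by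
    intro k
    rw [eunorm_sq, dotProduct, Fintype.sum_prod_type_right]
    rfl
  have hYstep : ∀ k, Y (k + 1) = Y k + Q k * Y k * (Λ - 1)ᵀ := by
    intro k
    rw [← vec_inj, ← hxY, hx, add_mulVec, one_mulVec, hxY, kronecker_mulVec_vec, vec_add]
  have hmono : ∀ k, ∑ j, (B *ᵥ Y k j) ⬝ᵥ (B *ᵥ Y k j) ≤
      ∑ j, (B *ᵥ Y 0 j) ⬝ᵥ (B *ᵥ Y 0 j) := by
    intro k
    induction k with
    | zero => exact le_rfl
    | succ k ih => exact ((hQ k).sum_form_step_le B Λ hPΛ (hYstep k)).trans ih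
  refine (sq_le_sq₀ (eunorm_nonneg _)
    (mul_nonneg (Real.sqrt_nonneg _) (eunorm_nonneg _))).1 ?_
  rw [mul_pow, Real.sq_sqrt (by positivity), hnorm, hnorm]
  calc ∑ j, Y k j ⬝ᵥ Y k j ≤ D * ∑ j, (B *ᵥ Y k j) ⬝ᵥ (B *ᵥ Y k j) := by
        rw [Finset.mul_sum]
        exact Finset.sum_le_sum fun j _ => hinv _
    _ ≤ D * ∑ j, (B *ᵥ Y 0 j) ⬝ᵥ (B *ᵥ Y 0 j) := by
        gcongr D * ?_
        exact hmono k
    _ ≤ D * (C * ∑ j, Y 0 j ⬝ᵥ Y 0 j) := by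
        gcongr D * ?_
        rw [Finset.mul_sum]
        exact Finset.sum_le_sum fun j _ => hBC _
    _ = D * C * ∑ j, Y 0 j ⬝ᵥ Y 0 j := (mul_assoc _ _ _).symm
end
end

section
/- Let ε > 0 be a real number and N ≥ 1 an integer, and define δ(ε, N) := ε⁴ / (16 N⁸ n⁴). Let Λ ∈ ℝ^{p×p} be a connected discrete-time interconnection, r ∈ ℝ^p satisfy r^T Λ = r^T and r^T 1 = 1, and Ω ∈ ℝ^{p×p} be symmetric positive definite with (Λ − 1 r^T)^T Ω (Λ − 1 r^T) − Ω = −I_p. Define ρ(Λ) := σ_max(Ω) · max{1, |Λ − I_p|²} and V(x) := x^T (Ω ⊗ I_n) x. Then for every Q : ℕ → Q̄_n with σ_min(Σ_{k=0}^{N−1} Q_k) ≥ ε, the solution of x(k+1) = (I_{np} + (Λ − I_p) ⊗ Q_k) x(k) satisfies V(x(N) − x̄) ≤ (1 − δ(ε,N)/ρ(Λ)) · V(x(0) − x̄), where x̄ := (1 r^T ⊗ I_n) x(0). -/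
open Matrix Filter
open scoped Kronecker

noncomputable section

lemma Matrix.PosSemidef.exists_eq_transpose_mul_self {m : Type*} [Fintype m]
    {P : Matrix m m ℝ} (hP : P.PosSemidef) : ∃ S : Matrix m m ℝ, P = Sᵀ * S := by
  classical
  open scoped MatrixOrder Matrix.Norms.L2Operator in
  obtain ⟨S, hS⟩ := CStarAlgebra.nonneg_iff_eq_star_mul_self.mp hP.nonneg
  exact ⟨S, by rw [hS, star_eq_conjTranspose, conjTranspose_eq_transpose_of_trivial]⟩

lemma col_mul {l m n : Type*} [Fintype m] (M : Matrix l m ℝ) (Z : Matrix m n ℝ) (j : n) :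
    (M * Z).col j = M *ᵥ Z.col j := rfl

section FrobeniusNorm

open scoped Matrix.Norms.Frobenius

variable {l m n : Type*} [Fintype l] [Fintype m] [Fintype n]

lemma eunorm_nonneg_s15 (v : m → ℝ) : 0 ≤ eunorm v := Real.sqrt_nonneg _

lemma eunorm_sq_s15 (v : m → ℝ) : eunorm v ^ 2 = ∑ i, v i ^ 2 :=
  Real.sq_sqrt (Finset.sum_nonneg fun _ _ => sq_nonneg _)

lemma eunorm_sq_eq_dotProduct (v : m → ℝ) : eunorm v ^ 2 = v ⬝ᵥ v := by
  rw [eunorm_sq_s15]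
  exact Finset.sum_congr rfl fun i _ => pow_two _

lemma eunorm_smul (c : ℝ) (v : m → ℝ) : eunorm (c • v) = |c| * eunorm v := by
  simp only [eunorm, Pi.smul_apply, smul_eq_mul, mul_pow, ← Finset.mul_sum]
  rw [Real.sqrt_mul (sq_nonneg c), Real.sqrt_sq_eq_abs]

lemma eq_zero_of_eunorm_eq_zero {v : m → ℝ} (h : eunorm v = 0) : v = 0 := by
  have h2 := eunorm_sq_eq_dotProduct v
  rw [h] at h2
  exact dotProduct_self_eq_zero.1 (by simpa using h2.symm)

lemma dotProduct_le_eunorm_mul (u v : m → ℝ) : u ⬝ᵥ v ≤ eunorm u * eunorm v := by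
  refine le_of_sq_le_sq ?_ (mul_nonneg (eunorm_nonneg_s15 u) (eunorm_nonneg_s15 v))
  rw [mul_pow, eunorm_sq_s15, eunorm_sq_s15]
  exact Finset.sum_mul_sq_le_sq_mul_sq _ _ _

/-- The Euclidean operator norm is bounded by the Frobenius norm. -/
lemma eunorm_mulVec_le_sqrt_sum_sq (M : Matrix m n ℝ) (v : n → ℝ) :
    eunorm (M *ᵥ v) ≤ Real.sqrt (∑ i, ∑ j, M i j ^ 2) * eunorm v := by
  refine abs_le_of_sq_le_sq' ?_ (mul_nonneg (Real.sqrt_nonneg _) (eunorm_nonneg_s15 v)) |>.2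
  rw [mul_pow, Real.sq_sqrt (by positivity), eunorm_sq_s15, eunorm_sq_s15, Finset.sum_mul]
  exact Finset.sum_le_sum fun i _ => Finset.sum_mul_sq_le_sq_mul_sq _ _ _

lemma eunorm_inv_smul_self {v : m → ℝ} (h : eunorm v ≠ 0) :
    eunorm ((eunorm v)⁻¹ • v) = 1 := by
  rw [eunorm_smul, abs_of_nonneg (inv_nonneg.2 (eunorm_nonneg_s15 v)), inv_mul_cancel₀ h]

lemma eunorm_mulVec_inv_smul_self (M : Matrix m n ℝ) (v : n → ℝ) :
    eunorm (M *ᵥ ((eunorm v)⁻¹ • v)) = (eunorm v)⁻¹ * eunorm (M *ᵥ v) := by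
  rw [mulVec_smul, eunorm_smul, abs_of_nonneg (inv_nonneg.2 (eunorm_nonneg_s15 v))]

lemma eunorm_mulVec_le_specNorm_mul (M : Matrix m n ℝ) (v : n → ℝ) :
    eunorm (M *ᵥ v) ≤ specNorm M * eunorm v := by
  by_cases h : eunorm v = 0
  · simp [eq_zero_of_eunorm_eq_zero h, eunorm]
  have hv : 0 < eunorm v := lt_of_le_of_ne (eunorm_nonneg_s15 v) (Ne.symm h)
  have hle : eunorm (M *ᵥ ((eunorm v)⁻¹ • v)) ≤ specNorm M := by
    refine le_csSup ⟨Real.sqrt (∑ i, ∑ j, M i j ^ 2), ?_⟩ ⟨_, (eunorm_inv_smul_self h).le, rfl⟩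
    rintro c ⟨w, hw, rfl⟩
    exact (eunorm_mulVec_le_sqrt_sum_sq M w).trans
      (mul_le_of_le_one_right (Real.sqrt_nonneg _) hw)
  rwa [eunorm_mulVec_inv_smul_self, inv_mul_le_iff₀ hv, mul_comm] at hle

lemma eunorm_mulVec_le_sigmaMax_mul (M : Matrix m n ℝ) (v : n → ℝ) :
    eunorm (M *ᵥ v) ≤ sigmaMax M * eunorm v := by
  by_cases h : eunorm v = 0
  · simp [eq_zero_of_eunorm_eq_zero h, eunorm]
  have hv : 0 < eunorm v := lt_of_le_of_ne (eunorm_nonneg_s15 v) (Ne.symm h)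
  have hle : eunorm (M *ᵥ ((eunorm v)⁻¹ • v)) ≤ sigmaMax M := by
    refine le_csSup ⟨Real.sqrt (∑ i, ∑ j, M i j ^ 2), ?_⟩ ⟨_, eunorm_inv_smul_self h, rfl⟩
    rintro c ⟨w, hw, rfl⟩
    exact (eunorm_mulVec_le_sqrt_sum_sq M w).trans
      (mul_le_of_le_one_right (Real.sqrt_nonneg _) hw.le)
  rwa [eunorm_mulVec_inv_smul_self, inv_mul_le_iff₀ hv, mul_comm] at hle

lemma sigmaMin_mul_le_eunorm_mulVec (M : Matrix m n ℝ) (v : n → ℝ) :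
    sigmaMin M * eunorm v ≤ eunorm (M *ᵥ v) := by
  by_cases h : eunorm v = 0
  · simp [h, eunorm_nonneg_s15]
  have hv : 0 < eunorm v := lt_of_le_of_ne (eunorm_nonneg_s15 v) (Ne.symm h)
  have hle : sigmaMin M ≤ eunorm (M *ᵥ ((eunorm v)⁻¹ • v)) := by
    refine csInf_le ⟨0, ?_⟩ ⟨_, eunorm_inv_smul_self h, rfl⟩
    rintro c ⟨w, -, rfl⟩
    exact eunorm_nonneg_s15 _
  rwa [eunorm_mulVec_inv_smul_self, le_inv_mul_iff₀ hv, mul_comm] at hle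

lemma specNorm_nonneg (M : Matrix m n ℝ) : 0 ≤ specNorm M :=
  Real.sSup_nonneg (by rintro c ⟨w, -, rfl⟩; exact eunorm_nonneg_s15 _)

lemma sigmaMax_nonneg (M : Matrix m n ℝ) : 0 ≤ sigmaMax M :=
  Real.sSup_nonneg (by rintro c ⟨w, -, rfl⟩; exact eunorm_nonneg_s15 _)

lemma frobenius_sq_eq_trace (Z : Matrix m n ℝ) : ‖Z‖ ^ 2 = (Zᵀ * Z).trace := by
  rw [frobenius_norm_def, ← Real.sqrt_eq_rpow, Real.sq_sqrt (by positivity), trace,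
    Finset.sum_comm]
  simp [mul_apply, pow_two]

lemma frobenius_sq_eq_sum_col (Z : Matrix m n ℝ) : ‖Z‖ ^ 2 = ∑ j, eunorm (Z.col j) ^ 2 := by
  rw [frobenius_sq_eq_trace]
  simp only [eunorm_sq_eq_dotProduct]
  rfl

lemma frobenius_mul_le_of_eunorm_mulVec_le {M : Matrix l m ℝ} {c : ℝ} (hc : 0 ≤ c)
    (h : ∀ v, eunorm (M *ᵥ v) ≤ c * eunorm v) (Z : Matrix m n ℝ) : ‖M * Z‖ ≤ c * ‖Z‖ := by
  refine abs_le_of_sq_le_sq' ?_ (mul_nonneg hc (norm_nonneg Z)) |>.2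
  rw [mul_pow, frobenius_sq_eq_sum_col, frobenius_sq_eq_sum_col, Finset.mul_sum]
  refine Finset.sum_le_sum fun j _ => ?_
  rw [col_mul, ← mul_pow]
  exact pow_le_pow_left₀ (eunorm_nonneg_s15 _) (h _) 2

lemma mul_frobenius_le_of_le_eunorm_mulVec {M : Matrix l m ℝ} {c : ℝ} (hc : 0 ≤ c)
    (h : ∀ v, c * eunorm v ≤ eunorm (M *ᵥ v)) (Z : Matrix m n ℝ) : c * ‖Z‖ ≤ ‖M * Z‖ := by
  refine abs_le_of_sq_le_sq' ?_ (norm_nonneg _) |>.2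
  rw [mul_pow, frobenius_sq_eq_sum_col, frobenius_sq_eq_sum_col, Finset.mul_sum]
  refine Finset.sum_le_sum fun j _ => ?_
  rw [col_mul, ← mul_pow]
  exact pow_le_pow_left₀ (mul_nonneg hc (eunorm_nonneg_s15 _)) (h _) 2

lemma frobenius_add_sq (X Y : Matrix m n ℝ) :
    ‖X + Y‖ ^ 2 = ‖X‖ ^ 2 + 2 * (Xᵀ * Y).trace + ‖Y‖ ^ 2 := by
  have h : (Yᵀ * X).trace = (Xᵀ * Y).trace := by
    rw [← trace_transpose, transpose_mul, transpose_transpose]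
  simp only [frobenius_sq_eq_trace, transpose_add, Matrix.add_mul, Matrix.mul_add, trace_add, h]
  ring

/-- A factor `R` of a positive semidefinite `Q = Rᵀ R` of spectral norm at most one is a
contraction, and so is its transpose. -/
lemma frobenius_mul_factor_le {R Q : Matrix n n ℝ} (hQR : Q = Rᵀ * R) (hQ : specNorm Q ≤ 1)
    (Z : Matrix m n ℝ) : ‖Z * R‖ ≤ ‖Z‖ ∧ ‖Z * Rᵀ‖ ≤ ‖Z‖ := by
  have hQv (v : n → ℝ) : eunorm (Q *ᵥ v) ≤ eunorm v :=
    (eunorm_mulVec_le_specNorm_mul Q v).trans (mul_le_of_le_one_left (eunorm_nonneg_s15 v) hQ)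
  have hR (v : n → ℝ) : eunorm (R *ᵥ v) ≤ 1 * eunorm v := by
    rw [one_mul]
    refine abs_le_of_sq_le_sq' ?_ (eunorm_nonneg_s15 v) |>.2
    calc eunorm (R *ᵥ v) ^ 2 = v ⬝ᵥ (Q *ᵥ v) := by
          rw [eunorm_sq_eq_dotProduct, hQR, ← mulVec_mulVec, dotProduct_mulVec v, vecMul_transpose]
      _ ≤ eunorm v * eunorm (Q *ᵥ v) := dotProduct_le_eunorm_mul _ _
      _ ≤ eunorm v ^ 2 := by
          rw [pow_two]; exact mul_le_mul_of_nonneg_left (hQv v) (eunorm_nonneg_s15 v)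
  have hRt (v : n → ℝ) : eunorm (Rᵀ *ᵥ v) ≤ 1 * eunorm v := by
    have h : eunorm (Rᵀ *ᵥ v) ^ 2 ≤ eunorm v * eunorm (Rᵀ *ᵥ v) := by
      calc eunorm (Rᵀ *ᵥ v) ^ 2 = v ⬝ᵥ (R *ᵥ (Rᵀ *ᵥ v)) := by
            rw [eunorm_sq_eq_dotProduct, dotProduct_mulVec v, ← mulVec_transpose]
        _ ≤ eunorm v * eunorm (R *ᵥ (Rᵀ *ᵥ v)) := dotProduct_le_eunorm_mul _ _
        _ ≤ eunorm v * eunorm (Rᵀ *ᵥ v) :=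
            mul_le_mul_of_nonneg_left (by simpa using hR (Rᵀ *ᵥ v)) (eunorm_nonneg_s15 v)
    have h1 := eunorm_nonneg_s15 v
    nlinarith [eunorm_nonneg_s15 (Rᵀ *ᵥ v)]
  constructor
  · rw [← frobenius_norm_transpose, transpose_mul, ← frobenius_norm_transpose Z]
    simpa using frobenius_mul_le_of_eunorm_mulVec_le zero_le_one hRt Zᵀ
  · rw [← frobenius_norm_transpose, transpose_mul, transpose_transpose,
      ← frobenius_norm_transpose Z]
    simpa using frobenius_mul_le_of_eunorm_mulVec_le zero_le_one hR Zᵀ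

/-- One-step decrease of the Lyapunov function `Y ↦ ‖S * Y‖ ^ 2`. -/
lemma lyapunov_step [DecidableEq m] {A S : Matrix m m ℝ}
    (hlyap : Aᵀ * (Sᵀ * S) * A - Sᵀ * S = -1) {R Q : Matrix n n ℝ} (hQR : Q = Rᵀ * R)
    (hQ : specNorm Q ≤ 1) (Y : Matrix m n ℝ) :
    ‖S * (Y + (A - 1) * Y * Q)‖ ^ 2 ≤ ‖S * Y‖ ^ 2 - ‖Y * Rᵀ‖ ^ 2 := by
  set a := S * Y with ha
  set b := S * ((A - 1) * Y * Rᵀ) with hb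
  have hsplit : S * (Y + (A - 1) * Y * Q) = a + b * R := by
    rw [hQR, Matrix.mul_add, ha, hb]
    simp only [Matrix.mul_assoc]
  have hcontr : ‖b * R‖ ^ 2 ≤ ‖b‖ ^ 2 :=
    pow_le_pow_left₀ (norm_nonneg _) (frobenius_mul_factor_le hQR hQ b).1 2
  have hcross : (aᵀ * (b * R)).trace = ((a * Rᵀ)ᵀ * b).trace := by
    rw [transpose_mul a, transpose_transpose, ← Matrix.mul_assoc, trace_mul_comm, Matrix.mul_assoc]
  have hsum : a * Rᵀ + b = S * A * (Y * Rᵀ) := by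
    rw [ha, hb]
    simp only [Matrix.mul_assoc, Matrix.sub_mul, Matrix.mul_sub, Matrix.one_mul]
    abel
  have hdecr : ‖S * A * (Y * Rᵀ)‖ ^ 2 = ‖a * Rᵀ‖ ^ 2 - ‖Y * Rᵀ‖ ^ 2 := by
    have hA : Aᵀ * (Sᵀ * S) * A = Sᵀ * S - 1 := by
      rw [sub_eq_iff_eq_add.1 hlyap]; abel
    have h1 : (S * A * (Y * Rᵀ))ᵀ * (S * A * (Y * Rᵀ))
        = (Y * Rᵀ)ᵀ * (Aᵀ * (Sᵀ * S) * A) * (Y * Rᵀ) := by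
      rw [transpose_mul, transpose_mul S A]; simp only [Matrix.mul_assoc]
    have h2 : (a * Rᵀ)ᵀ * (a * Rᵀ) = (Y * Rᵀ)ᵀ * (Sᵀ * S) * (Y * Rᵀ) := by
      rw [ha, Matrix.mul_assoc S, transpose_mul S]; simp only [Matrix.mul_assoc]
    rw [frobenius_sq_eq_trace, frobenius_sq_eq_trace, frobenius_sq_eq_trace, h1, h2, hA,
      Matrix.mul_sub, Matrix.sub_mul, trace_sub, Matrix.mul_one]
  have hadd := frobenius_add_sq (a * Rᵀ) b
  rw [hsum, hdecr] at hadd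
  rw [hsplit, frobenius_add_sq, hcross]
  linarith

/-- Excitation bound: over an exciting window the accumulated decrease controls the initial
state. -/
lemma excitation_bound {ε : ℝ} (hε : 0 ≤ ε) {N : ℕ} {B : Matrix m m ℝ}
    {Q R : ℕ → Matrix n n ℝ} (hQR : ∀ k, Q k = (R k)ᵀ * R k) (hQ : ∀ k, specNorm (Q k) ≤ 1)
    (hQε : ε ≤ sigmaMin (∑ k ∈ Finset.range N, Q k)) {Y : ℕ → Matrix m n ℝ}
    (hY : ∀ k, Y (k + 1) = Y k + B * Y k * Q k) :
    ε ^ 2 * ‖Y 0‖ ^ 2 ≤ (N : ℝ) ^ 3 * max 1 (specNorm B ^ 2) *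
        ∑ k ∈ Finset.range N, ‖Y k * (R k)ᵀ‖ ^ 2 ∧
      ε * ‖Y 0‖ ≤ N * ‖Y 0‖ := by
  set s : ℕ → ℝ := fun k => ‖Y k * (R k)ᵀ‖
  set L := specNorm B
  set c := max 1 L with hc
  have hs0 (k : ℕ) : 0 ≤ s k := norm_nonneg _
  have hdrift (k : ℕ) : ‖Y k - Y 0‖ ≤ L * ∑ j ∈ Finset.range k, s j := by
    induction k with
    | zero => simp
    | succ k ih =>
      have hstep : ‖B * Y k * Q k‖ ≤ L * s k := by
        rw [Matrix.mul_assoc]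
        refine (frobenius_mul_le_of_eunorm_mulVec_le (specNorm_nonneg B)
          (eunorm_mulVec_le_specNorm_mul B) _).trans
          (mul_le_mul_of_nonneg_left ?_ (specNorm_nonneg B))
        rw [hQR k, ← Matrix.mul_assoc]
        exact (frobenius_mul_factor_le (hQR k) (hQ k) _).1
      rw [hY k, Finset.sum_range_succ, mul_add, add_sub_right_comm]
      exact (norm_add_le _ _).trans (add_le_add ih hstep)
  have hinit (k : ℕ) (hk : k ∈ Finset.range N) :
      ‖Y 0 * (R k)ᵀ‖ ≤ c * ∑ j ∈ Finset.range N, s j := by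
    have hdecomp : Y 0 * (R k)ᵀ = Y k * (R k)ᵀ - (Y k - Y 0) * (R k)ᵀ := by
      rw [Matrix.sub_mul]; abel
    have hsub : Finset.range (k + 1) ⊆ Finset.range N :=
      Finset.range_subset_range.2 (Finset.mem_range.1 hk)
    have hsum0 : 0 ≤ ∑ j ∈ Finset.range k, s j := Finset.sum_nonneg fun j _ => hs0 j
    calc ‖Y 0 * (R k)ᵀ‖ ≤ s k + ‖(Y k - Y 0) * (R k)ᵀ‖ := by
          rw [hdecomp]; exact norm_sub_le _ _
      _ ≤ s k + L * ∑ j ∈ Finset.range k, s j :=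
          add_le_add_right ((frobenius_mul_factor_le (hQR k) (hQ k) _).2.trans (hdrift k)) _
      _ ≤ c * s k + c * ∑ j ∈ Finset.range k, s j :=
          add_le_add (le_mul_of_one_le_left (hs0 k) (le_max_left _ _))
            (mul_le_mul_of_nonneg_right (le_max_right _ _) hsum0)
      _ = c * ∑ j ∈ Finset.range (k + 1), s j := by rw [Finset.sum_range_succ]; ring
      _ ≤ c * ∑ j ∈ Finset.range N, s j :=
          mul_le_mul_of_nonneg_left
            (Finset.sum_le_sum_of_subset_of_nonneg hsub fun j _ _ => hs0 j)
            (zero_le_one.trans (le_max_left _ _))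
  have hexc : ε * ‖Y 0‖ ≤ ∑ k ∈ Finset.range N, ‖Y 0 * (R k)ᵀ‖ := by
    have hQt (k : ℕ) : (Q k)ᵀ = Q k := by rw [hQR k, transpose_mul, transpose_transpose]
    calc ε * ‖Y 0‖ = ε * ‖(Y 0)ᵀ‖ := by rw [frobenius_norm_transpose]
      _ ≤ ‖(∑ k ∈ Finset.range N, Q k) * (Y 0)ᵀ‖ :=
          mul_frobenius_le_of_le_eunorm_mulVec hε (fun v =>
            (mul_le_mul_of_nonneg_right hQε (eunorm_nonneg_s15 v)).trans
              (sigmaMin_mul_le_eunorm_mulVec _ v)) _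
      _ ≤ ∑ k ∈ Finset.range N, ‖Q k * (Y 0)ᵀ‖ := by
          rw [Matrix.sum_mul]; exact norm_sum_le _ _
      _ ≤ ∑ k ∈ Finset.range N, ‖Y 0 * (R k)ᵀ‖ := by
          refine Finset.sum_le_sum fun k _ => ?_
          rw [← frobenius_norm_transpose, transpose_mul, transpose_transpose, hQt k, hQR k,
            ← Matrix.mul_assoc]
          exact (frobenius_mul_factor_le (hQR k) (hQ k) _).1
  constructor
  · have hlin : ε * ‖Y 0‖ ≤ N * (c * ∑ j ∈ Finset.range N, s j) := by
      refine hexc.trans ((Finset.sum_le_sum hinit).trans ?_)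
      simp
    have hcs : (∑ j ∈ Finset.range N, s j) ^ 2 ≤ N * ∑ j ∈ Finset.range N, s j ^ 2 := by
      simpa using sq_sum_le_card_mul_sum_sq (s := Finset.range N) (f := s)
    have hc2 : c ^ 2 = max 1 (L ^ 2) := by
      rcases le_total 1 L with h | h
      · rw [hc, max_eq_right h, max_eq_right (by nlinarith)]
      · rw [hc, max_eq_left h, max_eq_left (by nlinarith [specNorm_nonneg B]), one_pow]
    calc ε ^ 2 * ‖Y 0‖ ^ 2 = (ε * ‖Y 0‖) ^ 2 := by ring
      _ ≤ (N * (c * ∑ j ∈ Finset.range N, s j)) ^ 2 :=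
          pow_le_pow_left₀ (mul_nonneg hε (norm_nonneg _)) hlin 2
      _ = (N : ℝ) ^ 2 * c ^ 2 * (∑ j ∈ Finset.range N, s j) ^ 2 := by ring
      _ ≤ (N : ℝ) ^ 2 * c ^ 2 * (N * ∑ j ∈ Finset.range N, s j ^ 2) :=
          mul_le_mul_of_nonneg_left hcs (by positivity)
      _ = _ := by rw [hc2]; ring
  · refine hexc.trans ((Finset.sum_le_sum fun k _ =>
      (frobenius_mul_factor_le (hQR k) (hQ k) (Y 0)).2).trans ?_)
    simp

lemma frobenius_mul_sq_le_sigmaMax {S Ω : Matrix m m ℝ} (hS : Ω = Sᵀ * S) (Y : Matrix m n ℝ) :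
    ‖S * Y‖ ^ 2 ≤ sigmaMax Ω * ‖Y‖ ^ 2 := by
  rw [frobenius_sq_eq_sum_col, frobenius_sq_eq_sum_col, Finset.mul_sum]
  refine Finset.sum_le_sum fun j _ => ?_
  calc eunorm ((S * Y).col j) ^ 2 = Y.col j ⬝ᵥ (Ω *ᵥ Y.col j) := by
        rw [col_mul, eunorm_sq_eq_dotProduct, hS, ← mulVec_mulVec, dotProduct_mulVec (Y.col j),
          vecMul_transpose]
    _ ≤ eunorm (Y.col j) * (sigmaMax Ω * eunorm (Y.col j)) :=
        (dotProduct_le_eunorm_mul _ _).trans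
          (mul_le_mul_of_nonneg_left (eunorm_mulVec_le_sigmaMax_mul _ _) (eunorm_nonneg_s15 _))
    _ = sigmaMax Ω * eunorm (Y.col j) ^ 2 := by ring

lemma deltaDT_mul_frobenius_sq_le {d N : ℕ} {ε : ℝ} (hε : 0 ≤ ε) (hN : 1 ≤ N) {y T : ℝ}
    (hy : 0 ≤ y) (hT : ε ^ 2 * y ^ 2 ≤ (N : ℝ) ^ 3 * T) (hεN : ε * y ≤ N * y) :
    deltaDT d ε N * y ^ 2 ≤ T := by
  have hN1 : (1 : ℝ) ≤ N := by exact_mod_cast hN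
  have hN0 : (0 : ℝ) < N := zero_lt_one.trans_le hN1
  have hδ : deltaDT d ε N ≤ ε ^ 4 / (N : ℝ) ^ 5 := by
    rcases Nat.eq_zero_or_pos d with rfl | hd
    · simp only [deltaDT, Nat.cast_zero]
      norm_num
      positivity
    · have hd1 : (1 : ℝ) ≤ d := by exact_mod_cast hd
      refine div_le_div_of_nonneg_left (by positivity) (by positivity) ?_
      have h4 : (1 : ℝ) ≤ (d : ℝ) ^ 4 := one_le_pow₀ hd1
      have h8 : (N : ℝ) ^ 5 ≤ (N : ℝ) ^ 8 := pow_le_pow_right₀ hN1 (by norm_num)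
      nlinarith [pow_pos hN0 8]
  have hT0 : 0 ≤ T := by
    have : 0 ≤ (N : ℝ) ^ 3 * T := le_trans (by positivity) hT
    exact nonneg_of_mul_nonneg_right this (by positivity)
  have hsq : ε ^ 2 * y ^ 2 ≤ (N : ℝ) ^ 2 * y ^ 2 := by
    rw [← mul_pow, ← mul_pow]
    exact pow_le_pow_left₀ (mul_nonneg hε hy) hεN 2
  calc deltaDT d ε N * y ^ 2 ≤ ε ^ 4 / (N : ℝ) ^ 5 * y ^ 2 :=
        mul_le_mul_of_nonneg_right hδ (sq_nonneg y)
    _ ≤ T := by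
        rw [div_mul_eq_mul_div, div_le_iff₀ (by positivity)]
        calc ε ^ 4 * y ^ 2 = ε ^ 2 * (ε ^ 2 * y ^ 2) := by ring
          _ ≤ ε ^ 2 * ((N : ℝ) ^ 2 * y ^ 2) := mul_le_mul_of_nonneg_left hsq (sq_nonneg ε)
          _ = (N : ℝ) ^ 2 * (ε ^ 2 * y ^ 2) := by ring
          _ ≤ (N : ℝ) ^ 2 * ((N : ℝ) ^ 3 * T) := mul_le_mul_of_nonneg_left hT (by positivity)
          _ = T * (N : ℝ) ^ 5 := by ring

lemma kronecker_mulVec_eq_mul (B : Matrix m m ℝ) (C : Matrix n n ℝ) (z : m × n → ℝ) :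
    (of fun i a => ((B ⊗ₖ C) *ᵥ z) (i, a)) = B * (of fun i a => z (i, a)) * Cᵀ := by
  ext i a
  simp only [of_apply, mulVec, dotProduct, Fintype.sum_prod_type, kroneckerMap_apply, mul_apply,
    transpose_apply, Finset.sum_mul]
  rw [Finset.sum_comm]
  exact Finset.sum_congr rfl fun b _ => Finset.sum_congr rfl fun j _ => by ring

lemma dotProduct_kronecker_one_mulVec [DecidableEq n] {S Ω : Matrix m m ℝ} (hS : Ω = Sᵀ * S)
    (z : m × n → ℝ) :
    z ⬝ᵥ ((Ω ⊗ₖ (1 : Matrix n n ℝ)) *ᵥ z) = ‖S * (of fun i a => z (i, a))‖ ^ 2 := by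
  have hΩ : Ω ⊗ₖ (1 : Matrix n n ℝ) = (S ⊗ₖ (1 : Matrix n n ℝ))ᵀ * (S ⊗ₖ (1 : Matrix n n ℝ)) := by
    rw [hS, ← kroneckerMap_transpose, transpose_one, ← mul_kronecker_mul, Matrix.one_mul]
  have h := kronecker_mulVec_eq_mul S (1 : Matrix n n ℝ) z
  rw [transpose_one, Matrix.mul_one] at h
  rw [← h, hΩ, ← mulVec_mulVec, dotProduct_mulVec, vecMul_transpose, frobenius_sq_eq_trace,
    trace, dotProduct, Fintype.sum_prod_type, Finset.sum_comm]
  rfl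

theorem stmt15 {p n : ℕ} (ε : ℝ) (hε : 0 < ε) (N : ℕ) (hN : 1 ≤ N)
    (Λ : Matrix (Fin p) (Fin p) ℝ)
    (hΛ : IsInterconnectionDT Λ) (hconn : ConnectedMat Λ)
    (r : Fin p → ℝ) (hr1 : Matrix.vecMul r Λ = r) (hr2 : ∑ i, r i = 1)
    (Ω : Matrix (Fin p) (Fin p) ℝ) (hΩs : Ω.IsSymm) (hΩpd : Ω.PosDef)
    (hlyap : (Λ - vecMulVec (fun _ => (1 : ℝ)) r)ᵀ * Ω * (Λ - vecMulVec (fun _ => (1 : ℝ)) r) - Ω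
        = -1)
    (V : ((Fin p × Fin n) → ℝ) → ℝ)
    (hV : ∀ z, V z = z ⬝ᵥ ((Ω ⊗ₖ (1 : Matrix (Fin n) (Fin n) ℝ)).mulVec z))
    (Q : ℕ → Matrix (Fin n) (Fin n) ℝ)
    (hQ : ∀ k, InQbar (Q k))
    (hQε : ε ≤ sigmaMin (∑ k ∈ Finset.range N, Q k))
    (x : ℕ → (Fin p × Fin n) → ℝ)
    (hx : ∀ k : ℕ, x (k + 1)
      = ((1 : Matrix (Fin p × Fin n) (Fin p × Fin n) ℝ) + (Λ - 1) ⊗ₖ Q k).mulVec (x k))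
    (xbar : (Fin p × Fin n) → ℝ)
    (hxbar : xbar = ((vecMulVec (fun _ => (1 : ℝ)) r) ⊗ₖ (1 : Matrix (Fin n) (Fin n) ℝ)).mulVec (x 0)) :
    V (x N - xbar)
      ≤ (1 - deltaDT n ε N / (sigmaMax Ω * max 1 (specNorm (Λ - 1) ^ 2))) * V (x 0 - xbar) := by
  obtain ⟨S, hS⟩ : ∃ S : Matrix (Fin p) (Fin p) ℝ, Ω = Sᵀ * S :=
    hΩpd.posSemidef.exists_eq_transpose_mul_self
  have hfactor (k : ℕ) : ∃ R : Matrix (Fin n) (Fin n) ℝ, Q k = Rᵀ * R :=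
    (hQ k).1.exists_eq_transpose_mul_self
  choose R hR using hfactor
  set J : Matrix (Fin p) (Fin p) ℝ := vecMulVec (fun _ => (1 : ℝ)) r with hJ
  set Y : ℕ → Matrix (Fin p) (Fin n) ℝ := fun k => of fun i a => (x k - xbar) (i, a)
  have hQt (k : ℕ) : (Q k)ᵀ = Q k := by rw [hR k, transpose_mul, transpose_transpose]
  have hΛJ : (Λ - 1) * J = 0 := by
    rw [hJ, mul_vecMulVec, sub_mulVec, one_mulVec]
    have : Λ *ᵥ (fun _ => (1 : ℝ)) = fun _ => 1 := by
      ext i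
      simpa [mulVec, dotProduct] using hΛ.2 i
    rw [this, sub_self, zero_vecMulVec]
  have hJΛ : J * (Λ - 1) = 0 := by
    rw [hJ, vecMulVec_mul, vecMul_sub, vecMul_one, hr1, sub_self, vecMulVec_zero]
  have hJJ : J * J = J := by
    rw [hJ, vecMulVec_mul_vecMulVec]
    have : r ⬝ᵥ (fun _ => (1 : ℝ)) = 1 := by simpa [dotProduct] using hr2
    rw [this, one_smul]
  set X : ℕ → Matrix (Fin p) (Fin n) ℝ := fun k => of fun i a => x k (i, a) with hXdef
  have hYX (k : ℕ) : Y k = X k - J * X 0 := by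
    have h := kronecker_mulVec_eq_mul J (1 : Matrix (Fin n) (Fin n) ℝ) (x 0)
    rw [transpose_one, Matrix.mul_one, ← hxbar] at h
    rw [hXdef, ← h]
    rfl
  have hX (k : ℕ) : X (k + 1) = X k + (Λ - 1) * X k * Q k := by
    have h := kronecker_mulVec_eq_mul (Λ - 1) (Q k) (x k)
    rw [hQt k] at h
    rw [hXdef, ← h]
    ext i a
    simp [hx k, add_mulVec]
  have hYstep (k : ℕ) : Y (k + 1) = Y k + (Λ - 1) * Y k * Q k := by
    rw [hYX, hYX, hX, Matrix.mul_sub, ← Matrix.mul_assoc (Λ - 1) J, hΛJ, Matrix.zero_mul, sub_zero]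
    abel
  have hJY (k : ℕ) : J * Y k = 0 := by
    induction k with
    | zero => rw [hYX, Matrix.mul_sub, ← Matrix.mul_assoc, hJJ, sub_self]
    | succ k ih =>
      rw [hYstep, Matrix.mul_add, ih, ← Matrix.mul_assoc, ← Matrix.mul_assoc, hJΛ]
      simp
  have hdecr (k : ℕ) : ‖S * Y (k + 1)‖ ^ 2 ≤ ‖S * Y k‖ ^ 2 - ‖Y k * (R k)ᵀ‖ ^ 2 := by
    have hstep : Y (k + 1) = Y k + (Λ - J - 1) * Y k * Q k := by
      rw [hYstep, sub_right_comm, Matrix.sub_mul _ J, hJY, sub_zero]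
    rw [hstep]
    exact lyapunov_step (hS ▸ hlyap) (hR k) (hQ k).2 (Y k)
  have hacc (M : ℕ) :
      ‖S * Y M‖ ^ 2 ≤ ‖S * Y 0‖ ^ 2 - ∑ k ∈ Finset.range M, ‖Y k * (R k)ᵀ‖ ^ 2 := by
    induction M with
    | zero => simp
    | succ M ih =>
      rw [Finset.sum_range_succ]
      linarith [hdecr M]
  have hVY (k : ℕ) : V (x k - xbar) = ‖S * Y k‖ ^ 2 := by
    rw [hV, dotProduct_kronecker_one_mulVec hS]
  obtain ⟨hexc, hεN⟩ := excitation_bound hε.le hR (fun k => (hQ k).2) hQε hYstep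
  set T := ∑ k ∈ Finset.range N, ‖Y k * (R k)ᵀ‖ ^ 2
  have hT0 : 0 ≤ T := Finset.sum_nonneg fun _ _ => sq_nonneg _
  set c := max 1 (specNorm (Λ - 1) ^ 2)
  have hc0 : 0 < c := zero_lt_one.trans_le (le_max_left _ _)
  have hδ : deltaDT n ε N * ‖Y 0‖ ^ 2 ≤ c * T :=
    deltaDT_mul_frobenius_sq_le hε.le hN (norm_nonneg _) (by rwa [← mul_assoc]) hεN
  have hδ0 : 0 ≤ deltaDT n ε N := by unfold deltaDT; positivity
  have hkey : deltaDT n ε N / (sigmaMax Ω * c) * ‖S * Y 0‖ ^ 2 ≤ T := by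
    rcases (sigmaMax_nonneg Ω).eq_or_lt with h | h
    · rw [← h]; simpa using hT0
    · rw [div_mul_eq_mul_div, div_le_iff₀ (mul_pos h hc0)]
      calc deltaDT n ε N * ‖S * Y 0‖ ^ 2 ≤ deltaDT n ε N * (sigmaMax Ω * ‖Y 0‖ ^ 2) :=
            mul_le_mul_of_nonneg_left (frobenius_mul_sq_le_sigmaMax hS _) hδ0
        _ = sigmaMax Ω * (deltaDT n ε N * ‖Y 0‖ ^ 2) := by ring
        _ ≤ sigmaMax Ω * (c * T) := mul_le_mul_of_nonneg_left hδ h.le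
        _ = T * (sigmaMax Ω * c) := by ring
  rw [hVY, hVY, sub_mul, one_mul]
  linarith [hacc N]

end FrobeniusNorm
end
end
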